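/- arXiv:2502.12069 — 5 statements merged into one kernel-verified Lean document; each statement's English description precedes it below -/
import Mathlib

section
/- Chain-collapse identity (method of joint reliability, exact case of Lemma 3): let Ω be a finite set, m ≥ 0, k a natural number, and p_j : Ω → [0,1] for 0 ≤ j ≤ m. Then the sum, over all chains of subsets Ω ⊇ s_0 ⊇ s_1 ⊇ … ⊇ s_m with |s_m| ≥ k, of ∏_{j=0}^{m} [ ∏_{u ∈ s_j} p_j(u) · ∏_{v ∈ s_{j−1} \ s_j} (1 − p_j(v)) ] (with s_{−1} := Ω) equals the single sum, over all subsets s ⊆ Ω with |s| ≥ k, of ∏_{u ∈ s} (∏_{j=0}^{m} p_j(u)) · ∏_{v ∈ Ω \ s} (1 − ∏_{j=0}^{m} p_j(v)). -/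
open Finset

/-!
Starting from `univ`, let phase `j` keep each surviving node `u` independently with probability
`p j u`. The summand attached to a chain is the weight of a path of the resulting Markov chain on
subsets, so summing over the chains with a given last set computes an entry of the product of the
transition matrices. Since nodes are kept independently, the matrix of a phase is a tensor product
of two-state matrices, and these multiply by multiplying their survival probabilities.
-/

section PathSum

variable {ι R : Type*} [Fintype ι] [DecidableEq ι] [CommSemiring R]

theorem prod_ofFn_mulVec_apply {n : ℕ} (M : Fin n → Matrix ι ι R) (f : ι → R) (a : ι) :
    (List.ofFn M).prod.mulVec f a =
      ∑ s : Fin n → ι,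
        (∏ j, M j ((Fin.cons a s : Fin (n + 1) → ι) j.castSucc) (s j)) *
          f ((Fin.cons a s : Fin (n + 1) → ι) (Fin.last n)) := by
  induction n generalizing a with
  | zero => simp
  | succ n ih =>
    rw [← (Fin.consEquiv fun _ => ι).sum_comp, Fintype.sum_prod_type, List.ofFn_succ,
      List.prod_cons, ← Matrix.mulVec_mulVec, Matrix.mulVec, dotProduct]
    refine sum_congr rfl fun b _ => ?_
    rw [ih, mul_sum]
    refine sum_congr rfl fun s _ => ?_
    simp [Fin.consEquiv, Fin.prod_univ_succ, ← Fin.succ_last, mul_assoc]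

end PathSum

theorem cons_castSucc_eq_ite {α : Type*} {m : ℕ} (a : α) (s : Fin (m + 1) → α) (j : Fin (m + 1)) :
    (Fin.cons a s : Fin (m + 2) → α) j.castSucc = if j = 0 then a else s (j - 1) := by
  cases j using Fin.cases with
  | zero => simp
  | succ i =>
    have pred_eq : i.succ - 1 = i.castSucc := by rw [sub_eq_iff_eq_add, Fin.coeSucc_eq_succ]
    rw [← Fin.succ_castSucc, Fin.cons_succ, if_neg i.succ_ne_zero, pred_eq]

theorem sum_prod_ite_mem {V R : Type*} [Fintype V] [DecidableEq V] [CommSemiring R] (f g : V → R) :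
    ∑ s : Finset V, ∏ v, (if v ∈ s then f v else g v) = ∏ v, (f v + g v) := by
  simp [prod_add, prod_ite, filter_not]

section Thinning

variable {V R : Type*} [Fintype V] [DecidableEq V] [CommRing R]

/-- The transition matrix of the random thinning that keeps each element `v` of a set
independently with probability `p v`. It is encoded as a product over all of `V` of two-state
kernels, in which the factor `0` rules out the appearance of new elements. -/
def thinningKernel (p : V → R) : Matrix (Finset V) (Finset V) R :=
  .of fun a b => ∏ v, if v ∈ b then (if v ∈ a then p v else 0) else if v ∈ a then 1 - p v else 1

theorem thinningKernel_apply (p : V → R) (a b : Finset V) :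
    thinningKernel p a b = if b ⊆ a then (∏ v ∈ b, p v) * ∏ v ∈ a \ b, (1 - p v) else 0 := by
  have kept : ∏ v ∈ b, (if v ∈ a then p v else 0) = if b ⊆ a then ∏ v ∈ b, p v else 0 :=
    prod_ite_zero
  have lost : ∏ v ∈ univ \ b, (if v ∈ a then 1 - p v else 1) = ∏ v ∈ a \ b, (1 - p v) := by
    rw [prod_ite_mem, sdiff_inter_right_comm, univ_inter]
  rw [thinningKernel, Matrix.of_apply, prod_ite, filter_not, filter_univ_mem, kept, lost,
    ite_zero_mul]

theorem thinningKernel_one : thinningKernel (1 : V → R) = 1 := by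
  ext a b
  have agree (v : V) : (if v ∈ b then (if v ∈ a then (1 : R) else 0)
      else if v ∈ a then 1 - 1 else 1) = if v ∈ a ↔ v ∈ b then 1 else 0 := by
    split_ifs <;> simp_all
  simp only [thinningKernel, Matrix.of_apply, Pi.one_apply, agree, prod_ite_zero, prod_const_one,
    Matrix.one_apply, Finset.ext_iff, mem_univ, true_imp_iff]

theorem thinningKernel_mul (p q : V → R) :
    thinningKernel (p * q) = thinningKernel p * thinningKernel q := by
  ext a c
  have factor (b : Finset V) : thinningKernel p a b * thinningKernel q b c =
      ∏ v, if v ∈ b then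
          (if v ∈ a then p v else 0) * (if v ∈ c then q v else 1 - q v)
        else (if v ∈ a then 1 - p v else 1) * (if v ∈ c then 0 else 1) := by
    simp only [thinningKernel, Matrix.of_apply, ← prod_mul_distrib]
    refine prod_congr rfl fun v _ => ?_
    split_ifs <;> rfl
  simp only [Matrix.mul_apply, factor, sum_prod_ite_mem]
  refine prod_congr rfl fun v _ => ?_
  simp only [Pi.mul_apply]
  split_ifs <;> ring

theorem prod_ofFn_thinningKernel {n : ℕ} (p : Fin n → V → R) :
    (List.ofFn fun j => thinningKernel (p j)).prod = thinningKernel (∏ j, p j) := by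
  induction n with
  | zero => simp [thinningKernel_one]
  | succ n ih => rw [List.ofFn_succ, List.prod_cons, ih, Fin.prod_univ_succ, thinningKernel_mul]

theorem prod_thinningKernel_cons_univ {m : ℕ} (p : Fin (m + 1) → V → R)
    (s : Fin (m + 1) → Finset V) :
    ∏ j, thinningKernel (p j) ((Fin.cons univ s : Fin (m + 2) → Finset V) j.castSucc) (s j) =
      if ∀ j : Fin m, s j.succ ⊆ s j.castSucc then
        ∏ j, ((∏ u ∈ s j, p j u) *
          ∏ v ∈ (if j = 0 then univ else s (j - 1)) \ s j, (1 - p j v))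
      else 0 := by
  have nested : (∀ j, s j ⊆ (Fin.cons univ s : Fin (m + 2) → Finset V) j.castSucc) ↔
      ∀ j : Fin m, s j.succ ⊆ s j.castSucc := by
    simp [Fin.forall_fin_succ]
  simp only [thinningKernel_apply, prod_ite_zero, mem_univ, true_imp_iff, nested]
  simp only [cons_castSucc_eq_ite]

end Thinning

theorem chain_collapse_joint_reliability_general
    {V R : Type*} [Fintype V] [DecidableEq V] [CommRing R]
    (m : ℕ) (p : Fin (m + 1) → V → R) (f : Finset V → R) :
    ∑ s : Fin (m + 1) → Finset V with ∀ j : Fin m, s j.succ ⊆ s j.castSucc,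
      (∏ j, ((∏ u ∈ s j, p j u) *
        ∏ v ∈ (if j = 0 then univ else s (j - 1)) \ s j, (1 - p j v))) * f (s (Fin.last m)) =
      ∑ s : Finset V,
        ((∏ u ∈ s, ∏ j, p j u) * ∏ v ∈ univ \ s, (1 - ∏ j, p j v)) * f s := by
  have collapse := congrArg (fun K : Matrix (Finset V) (Finset V) R => K.mulVec f univ)
    (prod_ofFn_thinningKernel p)
  simp only [prod_ofFn_mulVec_apply, prod_thinningKernel_cons_univ, ← Fin.succ_last, Fin.cons_succ,
    ite_mul, zero_mul, ← sum_filter] at collapse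
  simpa [Matrix.mulVec, dotProduct, thinningKernel_apply] using collapse

/-- **Chain-collapse identity (exact case of Lemma 3, method of joint reliability).**
The sum over nested chains `univ ⊇ s 0 ⊇ s 1 ⊇ … ⊇ s m` with `k ≤ |s m|` of the
phase-wise products collapses to a single sum over subsets, with the joint
reliability `∏ j, p j u` of each node. -/
theorem chain_collapse_joint_reliability
    {V : Type*} [Fintype V] [DecidableEq V]
    (m : ℕ) (k : ℕ) (p : Fin (m + 1) → V → ℝ)
    (hp0 : ∀ j u, 0 ≤ p j u) (hp1 : ∀ j u, p j u ≤ 1) :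
    (∑ s ∈ Finset.univ.filter
        (fun s : Fin (m + 1) → Finset V =>
          (∀ j : Fin m, s j.succ ⊆ s j.castSucc) ∧ k ≤ (s (Fin.last m)).card),
      ∏ j : Fin (m + 1),
        ((∏ u ∈ s j, p j u) *
          ∏ v ∈ (if j = 0 then Finset.univ else s (j - 1)) \ s j, (1 - p j v))) =
      ∑ s ∈ Finset.univ.filter (fun s : Finset V => k ≤ s.card),
        (∏ u ∈ s, ∏ j : Fin (m + 1), p j u) *
          ∏ v ∈ Finset.univ \ s, (1 - ∏ j : Fin (m + 1), p j v) := by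
  simpa only [← filter_filter, sum_filter _ _, mul_ite, mul_one, mul_zero] using
    chain_collapse_joint_reliability_general m p fun s => if k ≤ s.card then 1 else 0
end

section
/- Power series method (Lemma 4): let Ω be a finite set with |Ω| = n, f a natural number with f < n, and q : Ω → ℝ (the joint failure rates). Then 1 − ∑_{s ⊆ Ω, |s| ≥ n−f} ∏_{u ∈ s} (1 − q(u)) · ∏_{v ∈ Ω \ s} q(v) = ∑_{t=f+1}^{n} (−1)^{t−f−1} · C(t−1, f) · Q_t, where Q_t = ∑_{s ⊆ Ω, |s| = t} ∏_{u ∈ s} q(u) and C(·,·) denotes the binomial coefficient. -/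
open Finset

/-!
Write `1 - P_C` as the sum, over the sets `s` of successful nodes with more than `f` failures, of
the probability of `s`. Multiplying out the factors `1 - q u` turns any such weighted sum into a
multilinear polynomial in `q` whose coefficient at `∏ w ∈ W, q w` is a signed sum over the subsets
of `W`. Here that coefficient is a truncated alternating sum of the binomial coefficients
`(#W).choose k`, which telescopes to a single binomial coefficient by Pascal's rule.
-/

theorem sum_Icc_mul_sum_powerset_card_eq {R V : Type*} [NonUnitalNonAssocSemiring R]
    (f : ℕ) (Ω : Finset V) (a : ℕ → R) (g : Finset V → R) :
    ∑ t ∈ Icc (f + 1) #Ω, a t * ∑ s ∈ Ω.powerset with #s = t, g s =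
      ∑ s ∈ Ω.powerset, (if f < #s then a #s else 0) * g s := by
  simp only [mul_sum, sum_filter, ite_mul, zero_mul, mul_ite, mul_zero]
  rw [sum_comm]
  refine sum_congr rfl fun s hs ↦ ?_
  simp [card_le_card (mem_powerset.1 hs)]

section Ring

variable {R : Type*} [Ring R]

theorem sum_range_sub_neg_one_pow_mul_choose {f n : ℕ} (hfn : f < n) :
    ∑ k ∈ range (n - f), (-1 : R) ^ k * n.choose k = (-1) ^ (n - f - 1) * (n - 1).choose f := by
  obtain ⟨m, rfl⟩ := Nat.exists_eq_add_of_lt hfn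
  have hrange : f + m + 1 - f = m + 1 := by omega
  have hchoose : (f + m).choose f = (f + m).choose m := Nat.choose_symm_add
  simpa [hrange, hchoose] using
    congrArg (Int.cast : ℤ → R) (Int.alternating_sum_range_choose_eq_choose (n := f + m) (m := m))

theorem sum_filter_lt_card_sdiff_neg_one_pow_card {V : Type*} [DecidableEq V]
    (f : ℕ) (W : Finset V) :
    ∑ U ∈ W.powerset with f < #(W \ U), (-1 : R) ^ #U =
      if f < #W then (-1) ^ (#W - f - 1) * ((#W - 1).choose f : R) else 0 := by
  have hcard : ∀ U ∈ W.powerset, (f < #(W \ U) ↔ #U < #W - f) := fun U hU ↦ by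
    have := card_sdiff_add_card_eq_card (mem_powerset.1 hU)
    omega
  have hrange : {k ∈ range (#W + 1) | k < #W - f} = range (#W - f) := by grind
  calc
    _ = ∑ k ∈ range (#W - f), (-1 : R) ^ k * (#W).choose k := by
      rw [filter_congr hcard, sum_filter,
        sum_powerset_apply_card fun k ↦ if k < #W - f then (-1 : R) ^ k else 0, ← hrange,
        sum_filter]
      simp only [nsmul_eq_mul', ite_mul, zero_mul]
    _ = _ := by
      split_ifs with hf
      · exact sum_range_sub_neg_one_pow_mul_choose hf
      · simp [Nat.sub_eq_zero_of_le (not_lt.1 hf)]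

end Ring

section CommRing

variable {R V : Type*} [CommRing R] [DecidableEq V]

theorem sum_powerset_mul_prod_one_sub_mul_prod_sdiff (Ω : Finset V) (c : Finset V → R)
    (q : V → R) :
    ∑ s ∈ Ω.powerset, c (Ω \ s) * ((∏ u ∈ s, (1 - q u)) * ∏ v ∈ Ω \ s, q v) =
      ∑ W ∈ Ω.powerset, (∑ U ∈ W.powerset, (-1) ^ #U * c (W \ U)) * ∏ w ∈ W, q w := by
  have expand (s : Finset V) :
      c (Ω \ s) * ((∏ u ∈ s, (1 - q u)) * ∏ v ∈ Ω \ s, q v) =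
        ∑ U ∈ s.powerset, (-1) ^ #U * c (Ω \ s) * ∏ w ∈ (Ω \ s) ∪ U, q w := by
    rw [prod_sub, sum_mul, mul_sum]
    refine sum_congr rfl fun U hU ↦ ?_
    have hdisj : Disjoint (Ω \ s) U := disjoint_sdiff_self_left.mono_right (mem_powerset.1 hU)
    rw [prod_union hdisj, prod_const_one]
    ring
  simp only [expand, sum_mul, sum_sigma']
  -- For fixed `U ⊆ Ω`, the map `s ↦ (Ω \ s) ∪ U` is an involution of the interval `[U, Ω]`.
  refine sum_nbij' (fun p ↦ ⟨(Ω \ p.1) ∪ p.2, p.2⟩) (fun p ↦ ⟨(Ω \ p.1) ∪ p.2, p.2⟩)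
    ?_ ?_ ?_ ?_ ?_
  all_goals
    rintro ⟨s, U⟩ h
    obtain ⟨hs, hU⟩ : s ⊆ Ω ∧ U ⊆ s := by simpa using h
  case refine_1 | refine_2 =>
    simp only [mem_sigma, mem_powerset]
    exact ⟨union_subset sdiff_subset (hU.trans hs), subset_union_right⟩
  case refine_3 | refine_4 =>
    have involutive : (Ω \ ((Ω \ s) ∪ U)) ∪ U = s := by grind
    simp [involutive]
  case refine_5 =>
    have hsdiff : ((Ω \ s) ∪ U) \ U = Ω \ s := by grind
    simp [hsdiff]

theorem sum_powerset_prod_one_sub_mul_prod_sdiff (Ω : Finset V) (q : V → R) :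
    ∑ s ∈ Ω.powerset, (∏ u ∈ s, (1 - q u)) * ∏ v ∈ Ω \ s, q v = 1 := by
  simp [← prod_add]

theorem one_sub_sum_powerset_card_sub_le_card (Ω : Finset V) (f : ℕ) (q : V → R) :
    1 - ∑ s ∈ Ω.powerset with #Ω - f ≤ #s, (∏ u ∈ s, (1 - q u)) * ∏ v ∈ Ω \ s, q v =
      ∑ s ∈ Ω.powerset with f < #(Ω \ s), (∏ u ∈ s, (1 - q u)) * ∏ v ∈ Ω \ s, q v := by
  have hcompl : ∀ s ∈ Ω.powerset, (¬ #Ω - f ≤ #s ↔ f < #(Ω \ s)) := fun s hs ↦ by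
    have := card_sdiff_add_card_eq_card (mem_powerset.1 hs)
    omega
  rw [sub_eq_iff_eq_add', ← filter_congr hcompl, sum_filter_add_sum_filter_not,
    sum_powerset_prod_one_sub_mul_prod_sdiff]

theorem power_series_method_general (Ω : Finset V) (f : ℕ) (q : V → R) :
    1 - ∑ s ∈ Ω.powerset with #Ω - f ≤ #s, (∏ u ∈ s, (1 - q u)) * ∏ v ∈ Ω \ s, q v =
      ∑ t ∈ Icc (f + 1) #Ω, (-1) ^ (t - f - 1) * ((t - 1).choose f : R) *
        ∑ s ∈ Ω.powerset with #s = t, ∏ u ∈ s, q u := by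
  calc
    _ = ∑ s ∈ Ω.powerset with f < #(Ω \ s), (∏ u ∈ s, (1 - q u)) * ∏ v ∈ Ω \ s, q v :=
      one_sub_sum_powerset_card_sub_le_card Ω f q
    _ = ∑ s ∈ Ω.powerset, (if f < #(Ω \ s) then 1 else 0) *
          ((∏ u ∈ s, (1 - q u)) * ∏ v ∈ Ω \ s, q v) := by
      simp only [sum_filter, ite_mul, one_mul, zero_mul]
    _ = ∑ W ∈ Ω.powerset, (∑ U ∈ W.powerset, (-1) ^ #U * if f < #(W \ U) then 1 else 0) *
          ∏ w ∈ W, q w :=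
      sum_powerset_mul_prod_one_sub_mul_prod_sdiff Ω (fun T ↦ if f < #T then 1 else 0) q
    _ = ∑ W ∈ Ω.powerset, (if f < #W then (-1) ^ (#W - f - 1) * ((#W - 1).choose f : R) else 0) *
          ∏ w ∈ W, q w := by
      simp only [mul_ite, mul_one, mul_zero, ← sum_filter,
        sum_filter_lt_card_sdiff_neg_one_pow_card]
    _ = _ :=
      (sum_Icc_mul_sum_powerset_card_eq f Ω (fun t ↦ (-1) ^ (t - f - 1) * ((t - 1).choose f : R))
        fun s ↦ ∏ u ∈ s, q u).symm

end CommRing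

/-- **Lemma 4 (power series method).** The consensus failure rate
`P_F = 1 - P_C` equals the alternating power-series expansion in the joint
failure rates `q u`, a polynomial identity. -/
theorem power_series_method
    {V : Type*} [DecidableEq V]
    (Ω : Finset V) (f : ℕ) (hf : f < Ω.card) (q : V → ℝ) :
    1 - ∑ s ∈ Ω.powerset.filter (fun s => Ω.card - f ≤ s.card),
          (∏ u ∈ s, (1 - q u)) * ∏ v ∈ Ω \ s, q v =
      ∑ t ∈ Finset.Icc (f + 1) Ω.card,
        (-1 : ℝ) ^ (t - f - 1) * ((t - 1).choose f : ℝ) *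
          ∑ s ∈ Ω.powerset.filter (fun s => s.card = t), ∏ u ∈ s, q u :=
  power_series_method_general Ω f q
end

section
/- First-term truncation bound (rigorous form of Corollary 3): let Ω be a finite set with |Ω| = n, f a natural number with f < n, and q : Ω → [0,1]. Then the consensus failure rate satisfies 1 − ∑_{s ⊆ Ω, |s| ≥ n−f} ∏_{u ∈ s} (1 − q(u)) · ∏_{v ∈ Ω \ s} q(v) ≤ Q_{f+1}, where Q_{f+1} = ∑_{s ⊆ Ω, |s| = f+1} ∏_{u ∈ s} q(u). -/
open Finset

/-! Consensus fails exactly when at least `f + 1` nodes fail, that is, when all nodes of some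
`T ⊆ Ω` with `f + 1` elements fail. By independence a given `T` fails entirely with probability
`∏ u ∈ T, q u`, so the claim is the union bound over all such `T`. -/

lemma sum_biUnion_le_sum_sum {ι α M : Type*} [DecidableEq α] [AddCommMonoid M] [Preorder M]
    [AddLeftMono M] {I : Finset ι} {A : ι → Finset α} {w : α → M}
    (hw : ∀ a ∈ I.biUnion A, 0 ≤ w a) :
    ∑ a ∈ I.biUnion A, w a ≤ ∑ i ∈ I, ∑ a ∈ A i, w a := by
  have himage : (I.sigma A).image Sigma.snd = I.biUnion A := by
    ext a
    simp
  rw [← himage] at hw ⊢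
  exact (sum_image_le_of_nonneg hw).trans_eq (sum_sigma I A _)

lemma le_sdiff_comm_of_le {α : Type*} [GeneralizedBooleanAlgebra α] {a b c : α} (ha : a ≤ c)
    (hb : b ≤ c) : a ≤ c \ b ↔ b ≤ c \ a := by
  rw [le_sdiff, le_sdiff, and_iff_right ha, and_iff_right hb, disjoint_comm]

lemma filter_powerset_le_card_sdiff {V : Type*} [DecidableEq V] (Ω : Finset V) (k : ℕ) :
    {s ∈ Ω.powerset | k ≤ #(Ω \ s)} =
      (Ω.powersetCard k).biUnion fun T => (Ω \ T).powerset := by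
  ext s
  simp only [mem_filter, mem_powerset, mem_biUnion, mem_powersetCard,
    le_card_iff_exists_subset_card]
  constructor
  · rintro ⟨hs, T, hT, hcard⟩
    have hTΩ : T ⊆ Ω := hT.trans sdiff_subset
    exact ⟨T, ⟨hTΩ, hcard⟩, (le_sdiff_comm_of_le hs hTΩ).2 hT⟩
  · rintro ⟨T, ⟨hTΩ, hcard⟩, hsT⟩
    have hs : s ⊆ Ω := hsT.trans sdiff_subset
    exact ⟨hs, T, (le_sdiff_comm_of_le hs hTΩ).1 hsT, hcard⟩

lemma not_card_sub_le_card_iff {V : Type*} [DecidableEq V] {Ω s : Finset V} (hs : s ⊆ Ω) (f : ℕ) :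
    ¬ #Ω - f ≤ #s ↔ f + 1 ≤ #(Ω \ s) := by
  rw [card_sdiff_of_subset hs]
  omega

lemma sum_powerset_sdiff_prod_mul_prod {V R : Type*} [DecidableEq V] [CommSemiring R]
    {Ω T : Finset V} (hT : T ⊆ Ω) (p q : V → R) :
    ∑ s ∈ (Ω \ T).powerset, (∏ u ∈ s, p u) * ∏ v ∈ Ω \ s, q v =
      (∏ u ∈ T, q u) * ∏ u ∈ Ω \ T, (p u + q u) := by
  rw [prod_add, mul_sum]
  refine sum_congr rfl fun s hs => ?_
  have hsT : s ⊆ Ω \ T := mem_powerset.1 hs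
  have hTs : T ⊆ Ω \ s := (le_sdiff_comm_of_le (hsT.trans sdiff_subset) hT).1 hsT
  rw [← prod_sdiff hTs, sdiff_right_comm]
  ring

section SuccessProb

variable {V R : Type*} [DecidableEq V] [CommRing R]

/-- The probability that, among the nodes of `Ω`, exactly those in `s` are jointly successful when
the nodes fail independently, node `u` with probability `q u`. Intended for `s ⊆ Ω`. -/
def successProb (Ω : Finset V) (q : V → R) (s : Finset V) : R :=
  (∏ u ∈ s, (1 - q u)) * ∏ v ∈ Ω \ s, q v

lemma sum_powerset_sdiff_successProb {Ω T : Finset V} (hT : T ⊆ Ω) (q : V → R) :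
    ∑ s ∈ (Ω \ T).powerset, successProb Ω q s = ∏ u ∈ T, q u := by
  simpa [successProb] using sum_powerset_sdiff_prod_mul_prod hT (fun u => 1 - q u) q

lemma sum_powerset_successProb (Ω : Finset V) (q : V → R) :
    ∑ s ∈ Ω.powerset, successProb Ω q s = 1 := by
  simpa using sum_powerset_sdiff_successProb (empty_subset Ω) q

lemma one_sub_sum_filter_successProb (Ω : Finset V) (q : V → R) (P : Finset V → Prop)
    [DecidablePred P] :
    1 - ∑ s ∈ Ω.powerset with P s, successProb Ω q s =
      ∑ s ∈ Ω.powerset with ¬ P s, successProb Ω q s := by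
  rw [← sum_powerset_successProb Ω q, ← sum_filter_add_sum_filter_not Ω.powerset P,
    add_sub_cancel_left]

variable [PartialOrder R] [IsOrderedRing R] {Ω : Finset V} {q : V → R}

lemma successProb_nonneg (hq0 : ∀ u ∈ Ω, 0 ≤ q u) (hq1 : ∀ u ∈ Ω, q u ≤ 1) {s : Finset V}
    (hs : s ⊆ Ω) : 0 ≤ successProb Ω q s :=
  mul_nonneg (prod_nonneg fun u hu => sub_nonneg.2 (hq1 u (hs hu)))
    (prod_nonneg fun v hv => hq0 v (sdiff_subset hv))

lemma sum_successProb_le_sum_powersetCard_prod (hq0 : ∀ u ∈ Ω, 0 ≤ q u)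
    (hq1 : ∀ u ∈ Ω, q u ≤ 1) (k : ℕ) :
    ∑ s ∈ Ω.powerset with k ≤ #(Ω \ s), successProb Ω q s ≤
      ∑ T ∈ Ω.powersetCard k, ∏ u ∈ T, q u := by
  have hnonneg : ∀ s ∈ Ω.powerset.filter (fun s => k ≤ #(Ω \ s)), 0 ≤ successProb Ω q s :=
    fun s hs => successProb_nonneg hq0 hq1 (mem_powerset.1 (mem_filter.1 hs).1)
  rw [filter_powerset_le_card_sdiff] at hnonneg ⊢
  calc ∑ s ∈ (Ω.powersetCard k).biUnion fun T => (Ω \ T).powerset, successProb Ω q s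
      ≤ ∑ T ∈ Ω.powersetCard k, ∑ s ∈ (Ω \ T).powerset, successProb Ω q s :=
        sum_biUnion_le_sum_sum hnonneg
    _ = ∑ T ∈ Ω.powersetCard k, ∏ u ∈ T, q u :=
        sum_congr rfl fun T hT =>
          sum_powerset_sdiff_successProb (mem_powersetCard.1 hT).1 q

end SuccessProb

theorem failure_rate_le_first_term_general
    {V R : Type*} [DecidableEq V] [CommRing R] [PartialOrder R] [IsOrderedRing R]
    (Ω : Finset V) (f : ℕ) (q : V → R)
    (hq0 : ∀ u ∈ Ω, 0 ≤ q u) (hq1 : ∀ u ∈ Ω, q u ≤ 1) :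
    1 - ∑ s ∈ Ω.powerset.filter (fun s => Ω.card - f ≤ s.card),
          (∏ u ∈ s, (1 - q u)) * ∏ v ∈ Ω \ s, q v ≤
      ∑ s ∈ Ω.powerset.filter (fun s => s.card = f + 1), ∏ u ∈ s, q u := by
  calc 1 - ∑ s ∈ Ω.powerset with #Ω - f ≤ #s, successProb Ω q s
      = ∑ s ∈ Ω.powerset with ¬ #Ω - f ≤ #s, successProb Ω q s :=
        one_sub_sum_filter_successProb Ω q _
    _ = ∑ s ∈ Ω.powerset with f + 1 ≤ #(Ω \ s), successProb Ω q s := by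
        rw [filter_congr fun s hs => not_card_sub_le_card_iff (mem_powerset.1 hs) f]
    _ ≤ ∑ T ∈ Ω.powersetCard (f + 1), ∏ u ∈ T, q u :=
        sum_successProb_le_sum_powersetCard_prod hq0 hq1 (f + 1)
    _ = ∑ T ∈ Ω.powerset with #T = f + 1, ∏ u ∈ T, q u := by
        rw [powersetCard_eq_filter]

/-- **Corollary 3 (first-term truncation), rigorous upper-bound form.** The
consensus failure rate is bounded above by the first term `Q_{f+1}` of the power
series of Lemma 4. -/
theorem failure_rate_le_first_term
    {V : Type*} [DecidableEq V]
    (Ω : Finset V) (f : ℕ) (hf : f < Ω.card) (q : V → ℝ)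
    (hq0 : ∀ u ∈ Ω, 0 ≤ q u) (hq1 : ∀ u ∈ Ω, q u ≤ 1) :
    1 - ∑ s ∈ Ω.powerset.filter (fun s => Ω.card - f ≤ s.card),
          (∏ u ∈ s, (1 - q u)) * ∏ v ∈ Ω \ s, q v ≤
      ∑ s ∈ Ω.powerset.filter (fun s => s.card = f + 1), ∏ u ∈ s, q u :=
  failure_rate_le_first_term_general Ω f q hq0 hq1
end

section
/- Degenerate power series identity: for every real q, every natural number n ≥ 1, and every natural number f with f < n, the binomial tail satisfies ∑_{x=f+1}^{n} C(n, x) · q^x · (1 − q)^{n−x} = ∑_{t=f+1}^{n} (−1)^{t−f−1} · C(t−1, f) · C(n, t) · q^t, where C(·,·) denotes the binomial coefficient. -/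
open Finset

/-!
Expanding `(1 - q) ^ (n - x)` turns each binomial probability into a polynomial in `q`. After
exchanging the order of summation, the coefficient of `n.choose t * q ^ t` is the alternating sum of
the last entries of row `t` of Pascal's triangle, which collapses to a single entry of row `t - 1`.
-/

theorem alternating_sum_Icc_choose_eq_choose {R : Type*} [Ring R] {f t : ℕ} (hft : f < t) :
    ∑ x ∈ Icc (f + 1) t, (-1 : R) ^ (t - x) * (t.choose x : R) =
      (-1) ^ (t - f - 1) * ((t - 1).choose f : R) := by
  obtain ⟨d, rfl⟩ := Nat.exists_eq_add_of_lt hft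
  have reflect : ∑ x ∈ Icc (f + 1) (f + d + 1),
      (-1 : ℤ) ^ (f + d + 1 - x) * ((f + d + 1).choose x : ℤ) =
        ∑ i ∈ range (d + 1), (-1 : ℤ) ^ i * ((f + d + 1).choose i : ℤ) :=
    sum_nbij' (f + d + 1 - ·) (f + d + 1 - ·)
      (fun x hx => by simp only [mem_Icc] at hx; simp only [mem_range]; omega)
      (fun i hi => by simp only [mem_range] at hi; simp only [mem_Icc]; omega)
      (fun x hx => Nat.sub_sub_self (mem_Icc.mp hx).2)
      (fun i hi => Nat.sub_sub_self (by simp only [mem_range] at hi; omega))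
      (fun x hx => by rw [Nat.choose_symm (mem_Icc.mp hx).2])
  have exponent : f + d + 1 - f - 1 = d := by omega
  rw [exponent, Nat.add_sub_cancel, Nat.choose_symm_add]
  exact_mod_cast congrArg (Int.cast : ℤ → R)
    (reflect.trans Int.alternating_sum_range_choose_eq_choose)

theorem choose_mul_pow_mul_one_sub_pow_eq_sum {R : Type*} [CommRing R] (q : R) (n x : ℕ) :
    (n.choose x : R) * q ^ x * (1 - q) ^ (n - x) =
      ∑ t ∈ Icc x n, (-1) ^ (t - x) * (t.choose x : R) * (n.choose t : R) * q ^ t := by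
  obtain hnx | hxn := lt_or_ge n x
  · simp [Nat.choose_eq_zero_of_lt hnx, Icc_eq_empty_of_lt hnx]
  have choose_mul_choose (j : ℕ) : (n.choose x : R) * ((n - x).choose j : R) =
      (n.choose (x + j) : R) * ((x + j).choose x : R) := by
    have h := Nat.choose_mul (n := n) (Nat.le_add_right x j)
    rw [Nat.add_sub_cancel_left] at h
    simpa only [Nat.cast_mul] using congrArg (Nat.cast : ℕ → R) h.symm
  rw [sub_eq_neg_add, add_pow, mul_sum, ← Ico_add_one_right_eq_Icc, sum_Ico_eq_sum_range,
    Nat.sub_add_comm hxn]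
  refine sum_congr rfl fun j _ => ?_
  rw [Nat.add_sub_cancel_left, pow_add, one_pow, neg_pow]
  linear_combination (-1) ^ j * q ^ x * q ^ j * choose_mul_choose j

theorem binomial_tail_power_series_general {R : Type*} [CommRing R] (q : R) (n f : ℕ) :
    ∑ x ∈ Icc (f + 1) n, (n.choose x : R) * q ^ x * (1 - q) ^ (n - x) =
      ∑ t ∈ Icc (f + 1) n,
        (-1) ^ (t - f - 1) * ((t - 1).choose f : R) * (n.choose t : R) * q ^ t :=
  calc
    _ = ∑ x ∈ Icc (f + 1) n, ∑ t ∈ Icc x n,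
          (-1) ^ (t - x) * (t.choose x : R) * (n.choose t : R) * q ^ t :=
      sum_congr rfl fun x _ => choose_mul_pow_mul_one_sub_pow_eq_sum q n x
    _ = ∑ t ∈ Icc (f + 1) n, ∑ x ∈ Icc (f + 1) t,
          (-1) ^ (t - x) * (t.choose x : R) * (n.choose t : R) * q ^ t :=
      sum_comm' fun x t => by simp only [mem_Icc]; omega
    _ = _ := sum_congr rfl fun t ht => by
      rw [← sum_mul, ← sum_mul, alternating_sum_Icc_choose_eq_choose (mem_Icc.mp ht).1]

/-- **Degenerate power series identity.** The binomial tail probability equals the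
alternating power-series expansion, a polynomial identity in `q`. -/
theorem binomial_tail_power_series (q : ℝ) (n f : ℕ) (hn : 1 ≤ n) (hf : f < n) :
    (∑ x ∈ Finset.Icc (f + 1) n, (n.choose x : ℝ) * q ^ x * (1 - q) ^ (n - x)) =
      ∑ t ∈ Finset.Icc (f + 1) n,
        (-1 : ℝ) ^ (t - f - 1) * ((t - 1).choose f : ℝ) * (n.choose t : ℝ) * q ^ t :=
  binomial_tail_power_series_general q n f
end

section
/- Consensus reliability of W consecutive instances (rigorous lower-bound form of Theorem 5): let Ω be a finite set of n nodes, f < n, p_N : Ω → [0,1] the per-node non-faulty probabilities, and for each subset S ⊆ Ω let w(S) = ∏_{u ∈ S} p_N(u) · ∏_{v ∈ Ω \ S} (1 − p_N(v)) and let a(S) ∈ [0,1] be the conditional single-instance consensus reliability given non-faulty set S. Define P_C = ∑_{S ⊆ Ω, |S| ≥ n−f} w(S)·a(S), P_C^{Node} = ∑_{S ⊆ Ω, |S| ≥ n−f} w(S), and the W-instance reliability P_C^{Mul} = ∑_{S ⊆ Ω, |S| ≥ n−f} w(S)·a(S)^W. Then for every natural number W ≥ 1, P_C^{Mul} ≥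 W·P_C − (W − 1)·P_C^{Node}. -/
open Finset

/-! For `x ≥ -1`, Bernoulli's inequality says that `x ^ W` lies above its tangent line
`W * x - (W - 1)` at `x = 1`. Taking `x = a S` and summing against the nonnegative weights `w S`
turns the tangent line into `W * P_C - (W - 1) * P_C^Node`. -/

section

variable {R V : Type*} [CommRing R] [DecidableEq V] {Ω : Finset V} {p : V → R}

lemma prod_mul_prod_sdiff_one_sub_nonneg [PartialOrder R] [IsOrderedRing R] {S : Finset V}
    (hS : S ⊆ Ω) (hp₀ : ∀ u ∈ Ω, 0 ≤ p u) (hp₁ : ∀ u ∈ Ω, p u ≤ 1) :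
    0 ≤ (∏ u ∈ S, p u) * ∏ v ∈ Ω \ S, (1 - p v) :=
  mul_nonneg (prod_nonneg fun u hu => hp₀ u (hS hu))
    (prod_nonneg fun v hv => sub_nonneg.2 (hp₁ v (sdiff_subset hv)))

variable [LinearOrder R] [IsStrictOrderedRing R]

lemma mul_sum_sub_mul_sum_le_sum_mul_pow {ι : Type*} {s : Finset ι} {w a : ι → R}
    (hw : ∀ i ∈ s, 0 ≤ w i) (ha : ∀ i ∈ s, -1 ≤ a i) (n : ℕ) :
    n * ∑ i ∈ s, w i * a i - (n - 1) * ∑ i ∈ s, w i ≤ ∑ i ∈ s, w i * a i ^ n :=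
  calc n * ∑ i ∈ s, w i * a i - (n - 1) * ∑ i ∈ s, w i
    _ = ∑ i ∈ s, w i * (1 + n * (a i - 1)) := by
      rw [mul_sum, mul_sum, ← sum_sub_distrib]
      exact sum_congr rfl fun i _ => by ring
    _ ≤ ∑ i ∈ s, w i * a i ^ n := sum_le_sum fun i hi =>
      mul_le_mul_of_nonneg_left (one_add_mul_sub_le_pow (ha i hi) n) (hw i hi)

theorem multi_instance_reliability_lower_bound_general
    (hp₀ : ∀ u ∈ Ω, 0 ≤ p u) (hp₁ : ∀ u ∈ Ω, p u ≤ 1)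
    {𝒮 : Finset (Finset V)} (h𝒮 : 𝒮 ⊆ Ω.powerset)
    {a : Finset V → R} (ha : ∀ S ∈ 𝒮, -1 ≤ a S) (W : ℕ) :
    W * ∑ S ∈ 𝒮, ((∏ u ∈ S, p u) * ∏ v ∈ Ω \ S, (1 - p v)) * a S -
        (W - 1) * ∑ S ∈ 𝒮, (∏ u ∈ S, p u) * ∏ v ∈ Ω \ S, (1 - p v) ≤
      ∑ S ∈ 𝒮, ((∏ u ∈ S, p u) * ∏ v ∈ Ω \ S, (1 - p v)) * a S ^ W :=
  mul_sum_sub_mul_sum_le_sum_mul_pow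
    (fun _ hS => prod_mul_prod_sdiff_one_sub_nonneg (mem_powerset.1 (h𝒮 hS)) hp₀ hp₁) ha W

end

/-- **Theorem 5 (consensus reliability of `W` consecutive instances), rigorous
lower-bound form.** With `w S` the probability that the non-faulty set is exactly
`S` and `a S` the conditional single-instance reliability, the `W`-instance
reliability `P_C^Mul` is at least `W·P_C - (W-1)·P_C^Node`. -/
theorem multi_instance_reliability_lower_bound
    {V : Type*} [DecidableEq V]
    (Ω : Finset V) (f : ℕ) (hf : f < Ω.card)
    (pN : V → ℝ) (hpN0 : ∀ u ∈ Ω, 0 ≤ pN u) (hpN1 : ∀ u ∈ Ω, pN u ≤ 1)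
    (a : Finset V → ℝ) (ha0 : ∀ S, 0 ≤ a S) (ha1 : ∀ S, a S ≤ 1)
    (W : ℕ) (hW : 1 ≤ W) :
    (∑ S ∈ Ω.powerset.filter (fun S => Ω.card - f ≤ S.card),
        ((∏ u ∈ S, pN u) * ∏ v ∈ Ω \ S, (1 - pN v)) * a S ^ W) ≥
      (W : ℝ) *
          (∑ S ∈ Ω.powerset.filter (fun S => Ω.card - f ≤ S.card),
            ((∏ u ∈ S, pN u) * ∏ v ∈ Ω \ S, (1 - pN v)) * a S) -
        ((W : ℝ) - 1) *
          (∑ S ∈ Ω.powerset.filter (fun S => Ω.card - f ≤ S.card),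
            ((∏ u ∈ S, pN u) * ∏ v ∈ Ω \ S, (1 - pN v))) :=
  multi_instance_reliability_lower_bound_general hpN0 hpN1 (filter_subset _ _)
    (fun S _ => neg_one_lt_zero.le.trans (ha0 S)) W
end
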